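/- Let d_in be a positive integer and let u, v be fixed nonzero vectors in R^{d_in} with ||u|| = r·||v|| for some r > 0, and suppose cosSim(u,v) < ( (1/2)(r + 1/r) )^{-1}. For each positive integer m, let W be an m × d_in random matrix whose entries are independent N(0, 1/m) Gaussian random variables, and let b ∈ R^m be a random vector with independent N(0, 1/m) Gaussian coordinates, independent of W. Let ReLU act componentwise, ReLU(x)_k = max(x_k, 0). Then there exists a constant C > 0 (depending only on u and v) such that for every m ≥ 1, the probability that cosSim(ReLU(Wu + b), ReLU(Wv + b)) > cosSim(u, v) is at least 1 − C/m. -/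

import Mathlib

/-!
Up to the factor `1/√m`, the pairs of pre-activations `(X, Y)` of the `m` neurons are independent
copies of one centred Gaussian pair with `E X² = ‖u‖² + 1`, `E Y² = ‖v‖² + 1` and
`E XY = ⟨u,v⟩ + 1`. Write `X⁺` for `max X 0`. Since `(X, Y)` and `(-X, -Y)` have the same law,
`E (X⁺)² = E X² / 2`, and `E XY ≤ 2 E X⁺Y⁺` because `xy ≤ x⁺y⁺ + x⁻y⁻`. So the limiting
cosine similarity of the activations is at least `(⟨u,v⟩ + 1) / √((‖u‖² + 1)(‖v‖² + 1))`, and the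
hypothesis, which reads `cosSim u v < 2r / (r² + 1)`, makes this exceed `cosSim u v`
(`cos_lt_limit`).

The three inner products `⟨x⁺,y⁺⟩`, `‖x⁺‖²`, `‖y⁺‖²` of the activation vectors are sample means of
square-integrable variables, so by Chebyshev (`chebyshev_pi`) each is within a fixed `ε` of its
expectation outside an event of probability `O(1/m)`; continuity of `p - c √(ab)` at the
expectations supplies that `ε`.
-/

open MeasureTheory ProbabilityTheory

/-- Euclidean dot product on `Fin n → ℝ`. -/
noncomputable def dotp {n : ℕ} (x y : Fin n → ℝ) : ℝ := ∑ i, x i * y i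

/-- Euclidean norm on `Fin n → ℝ`. -/
noncomputable def enorm' {n : ℕ} (x : Fin n → ℝ) : ℝ := Real.sqrt (dotp x x)

/-- Cosine similarity: `⟨x,y⟩ / (‖x‖‖y‖)` for nonzero vectors, `0` otherwise. -/
noncomputable def cosSim {n : ℕ} (x y : Fin n → ℝ) : ℝ :=
  if x ≠ 0 ∧ y ≠ 0 then dotp x y / (enorm' x * enorm' y) else 0

/-- Componentwise ReLU. -/
noncomputable def relu {m : ℕ} (x : Fin m → ℝ) : Fin m → ℝ := fun k => max (x k) 0

/-! ### The Gaussian model of one neuron -/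

/-- Law of the parameters (weights, bias) of one neuron, rescaled to unit variance. -/
noncomputable def stdRow (d : ℕ) : Measure ((Fin d → ℝ) × ℝ) :=
  (Measure.pi fun _ : Fin d => gaussianReal 0 1).prod (gaussianReal 0 1)

instance stdRow_isProbabilityMeasure (d : ℕ) : IsProbabilityMeasure (stdRow d) := by
  unfold stdRow; infer_instance

/-- The linear form `(w, b) ↦ ⟨w, a⟩ + t b`; the pre-activation on input `a` is the case `t = 1`. -/
noncomputable def lin {d : ℕ} (a : Fin d → ℝ) (t : ℝ) (z : (Fin d → ℝ) × ℝ) : ℝ :=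
  (∑ l, z.1 l * a l) + t * z.2

lemma lin_neg {d : ℕ} (a : Fin d → ℝ) (t : ℝ) (z : (Fin d → ℝ) × ℝ) :
    lin a t (-z) = - lin a t z := by
  simp [lin, Finset.sum_neg_distrib]; ring

lemma lin_add {d : ℕ} (a b : Fin d → ℝ) (s t : ℝ) (z : (Fin d → ℝ) × ℝ) :
    lin (a + b) (s + t) z = lin a s z + lin b t z := by
  simp [lin, mul_add, Finset.sum_add_distrib]; ring

lemma measurePreserving_neg_stdRow (d : ℕ) :
    MeasurePreserving (fun z : (Fin d → ℝ) × ℝ => -z) (stdRow d) (stdRow d) := by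
  have h1 : MeasurePreserving (fun x : ℝ => -x) (gaussianReal 0 1) (gaussianReal 0 1) :=
    ⟨by fun_prop, by rw [gaussianReal_map_neg]; simp⟩
  exact (measurePreserving_pi (fun _ : Fin d => gaussianReal 0 1) _ (fun _ => h1)).prod h1

lemma memLp_lin {d : ℕ} (a : Fin d → ℝ) (t : ℝ) (p : ENNReal) (hp : p ≠ ⊤) :
    MemLp (lin a t) p (stdRow d) := by
  have hb : MemLp (fun z : (Fin d → ℝ) × ℝ => z.2) p (stdRow d) :=
    (memLp_id_gaussianReal' p hp).comp_measurePreserving measurePreserving_snd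
  have hw : ∀ l, MemLp (fun z : (Fin d → ℝ) × ℝ => z.1 l) p (stdRow d) := fun l =>
    (memLp_id_gaussianReal' p hp).comp_measurePreserving
      ((measurePreserving_eval (fun _ : Fin d => gaussianReal 0 1) l).comp measurePreserving_fst)
  unfold lin
  exact (memLp_finsetSum _ fun l _ => (hw l).mul_const (a l)).add (hb.const_mul t)

lemma integral_lin {d : ℕ} (a : Fin d → ℝ) (t : ℝ) : ∫ z, lin a t z ∂(stdRow d) = 0 := by
  have h := (measurePreserving_neg_stdRow d).integral_comp
    (MeasurableEquiv.neg _).measurableEmbedding (lin a t)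
  simp only [lin_neg, integral_neg] at h
  linarith

lemma integral_lin_sq {d : ℕ} (a : Fin d → ℝ) (t : ℝ) :
    ∫ z, lin a t z ^ 2 ∂(stdRow d) = dotp a a + t ^ 2 := by
  rw [← variance_of_integral_eq_zero (memLp_lin a t 2 (by simp)).aemeasurable (integral_lin a t)]
  have hid : MemLp (fun x : ℝ => x) 2 (gaussianReal 0 1) := memLp_id_gaussianReal' 2 (by simp)
  have hvar : Var[fun x : ℝ => x; gaussianReal 0 1] = 1 := by
    simp
  have hc : ∀ c : ℝ, Var[fun x : ℝ => x * c; gaussianReal 0 1] = c ^ 2 := fun c => by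
    simp_rw [mul_comm _ c]
    rw [variance_const_mul, hvar, mul_one]
  have hsum : MemLp (fun w : Fin d → ℝ => ∑ l, w l * a l) 2
      (Measure.pi fun _ : Fin d => gaussianReal 0 1) :=
    memLp_finsetSum _ fun l _ => (hid.mul_const (a l)).comp_measurePreserving
      (measurePreserving_eval (fun _ : Fin d => gaussianReal 0 1) l)
  have hv := variance_sum_pi (μ := fun _ : Fin d => gaussianReal 0 1)
    (X := fun l x => x * a l) (fun l => hid.mul_const (a l))
  have he : (∑ l : Fin d, fun w : Fin d → ℝ => w l * a l) = fun w => ∑ l, w l * a l := by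
    ext w; simp
  rw [he] at hv
  have := variance_add_prod hsum (hid.const_mul t)
  unfold lin stdRow
  rw [this, hv, variance_const_mul, hvar]
  simp [hc, dotp, pow_two]

lemma integral_lin_mul {d : ℕ} (a b : Fin d → ℝ) (s t : ℝ) :
    ∫ z, lin a s z * lin b t z ∂(stdRow d) = dotp a b + s * t := by
  have h : ∀ z, lin a s z * lin b t z =
      (1 / 2) * (lin (a + b) (s + t) z ^ 2 - lin a s z ^ 2 - lin b t z ^ 2) := fun z => by
    rw [lin_add]; ring
  have i : ∀ (a : Fin d → ℝ) t, Integrable (fun z => lin a t z ^ 2) (stdRow d) := fun a t =>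
    (memLp_lin a t 2 (by simp)).integrable_sq
  simp_rw [h]
  rw [integral_const_mul, integral_sub (by exact (i _ _).sub (i _ _)) (i _ _), integral_sub (i _ _) (i _ _)]
  simp only [integral_lin_sq]
  have : dotp (a + b) (a + b) = dotp a a + 2 * dotp a b + dotp b b := by
    simp only [dotp, Pi.add_apply, Finset.mul_sum, ← Finset.sum_add_distrib]
    exact Finset.sum_congr rfl fun l _ => by ring
  rw [this]; ring

/-! ### Moments of the activations -/

/-- Product of the activations of one neuron on inputs `a` and `b`. -/
noncomputable def act {d : ℕ} (a b : Fin d → ℝ) (z : (Fin d → ℝ) × ℝ) : ℝ :=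
  max (lin a 1 z) 0 * max (lin b 1 z) 0

lemma memLp_act {d : ℕ} (a b : Fin d → ℝ) : MemLp (act a b) 2 (stdRow d) := by
  have : ENNReal.HolderTriple 4 4 2 := ⟨by
    have h : (4 : ENNReal) = 2 * 2 := by norm_num
    rw [h, ENNReal.mul_inv (by simp) (by simp), ← mul_add, ENNReal.inv_two_add_inv_two, mul_one]⟩
  exact (memLp_lin b 1 4 (by simp)).pos_part.mul' (memLp_lin a 1 4 (by simp)).pos_part

lemma integral_act_neg {d : ℕ} (a b : Fin d → ℝ) :
    ∫ z, act a b (-z) ∂(stdRow d) = ∫ z, act a b z ∂(stdRow d) :=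
  (measurePreserving_neg_stdRow d).integral_comp
    (MeasurableEquiv.neg _).measurableEmbedding (act a b)

lemma integrable_act_add_neg {d : ℕ} (a b : Fin d → ℝ) :
    Integrable (act a b) (stdRow d) ∧ Integrable (fun z => act a b (-z)) (stdRow d) := by
  have h := (memLp_act a b).integrable (by norm_num)
  exact ⟨h, (measurePreserving_neg_stdRow d).integrable_comp_of_integrable h⟩

/-- Halving by symmetry: `xy ≤ x⁺y⁺ + x⁻y⁻`, and both terms have the same expectation. -/
lemma le_integral_act {d : ℕ} (a b : Fin d → ℝ) :
    (dotp a b + 1) / 2 ≤ ∫ z, act a b z ∂(stdRow d) := by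
  obtain ⟨h1, h2⟩ := integrable_act_add_neg a b
  have h : ∫ z, lin a 1 z * lin b 1 z ∂(stdRow d) ≤
      ∫ z, (act a b z + act a b (-z)) ∂(stdRow d) := by
    refine integral_mono
      ((memLp_lin a 1 2 (by simp)).integrable_mul (memLp_lin b 1 2 (by simp))) (h1.add h2) ?_
    intro z
    simp only [act, lin_neg]
    rcases le_total (lin a 1 z) 0 with ha | ha <;> rcases le_total (lin b 1 z) 0 with hb | hb <;>
      simp [ha, hb] <;> nlinarith
  rw [integral_add h1 h2, integral_act_neg, integral_lin_mul] at h
  linarith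

/-- For equal inputs the inequality of `le_integral_act` is an equality: `x² = (x⁺)² + (x⁻)²`. -/
lemma integral_act_self {d : ℕ} (a : Fin d → ℝ) :
    ∫ z, act a a z ∂(stdRow d) = (dotp a a + 1) / 2 := by
  obtain ⟨h1, h2⟩ := integrable_act_add_neg a a
  have h : ∫ z, lin a 1 z * lin a 1 z ∂(stdRow d) =
      ∫ z, (act a a z + act a a (-z)) ∂(stdRow d) := by
    congr 1
    ext z
    simp only [act, lin_neg]
    rcases le_total (lin a 1 z) 0 with ha | ha <;> simp [ha]
  rw [integral_add h1 h2, integral_act_neg, integral_lin_mul] at h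
  linarith

/-! ### Concentration -/

lemma chebyshev_pi {E : Type*} [MeasurableSpace E] (ν : Measure E) [IsProbabilityMeasure ν]
    {f : E → ℝ} (hf : MemLp f 2 ν) {ε : ℝ} (hε : 0 < ε) (m : ℕ) (hm : 1 ≤ m) :
    (Measure.pi fun _ : Fin m => ν).real
        {ω | ε ≤ |(∑ k, f (ω k)) / m - ∫ x, f x ∂ν|} ≤ Var[f; ν] / ε ^ 2 / m := by
  set P := Measure.pi fun _ : Fin m => ν with hP
  have hm0 : (0 : ℝ) < m := by exact_mod_cast hm
  have hk : ∀ k : Fin m, MemLp (fun ω : Fin m → E => f (ω k)) 2 P := fun k =>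
    hf.comp_measurePreserving (measurePreserving_eval (fun _ : Fin m => ν) k)
  have hS : MemLp (fun ω : Fin m → E => ∑ k, f (ω k)) 2 P := memLp_finsetSum _ fun k _ => hk k
  have hmean : ∫ ω, ∑ k, f (ω k) ∂P = m * ∫ x, f x ∂ν := by
    rw [integral_finsetSum _ fun k _ => (hk k).integrable (by norm_num)]
    have : ∀ k : Fin m, ∫ ω, f (ω k) ∂P = ∫ x, f x ∂ν := fun k =>
      integral_comp_eval (μ := fun _ : Fin m => ν) hf.aestronglyMeasurable
    simp [this]
  have hvar : Var[fun ω : Fin m → E => ∑ k, f (ω k); P] = m * Var[f; ν] := by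
    have he : (∑ k : Fin m, fun ω : Fin m → E => f (ω k)) = fun ω => ∑ k, f (ω k) := by
      ext w; simp
    have := variance_sum_pi (μ := fun _ : Fin m => ν) (X := fun _ => f) (fun _ => hf)
    rw [he] at this
    rw [hP, this]; simp
  have hc := meas_ge_le_variance_div_sq hS (c := m * ε) (by positivity)
  rw [hmean, hvar] at hc
  have hset : {ω : Fin m → E | ε ≤ |(∑ k, f (ω k)) / m - ∫ x, f x ∂ν|} =
      {ω | m * ε ≤ |∑ k, f (ω k) - m * ∫ x, f x ∂ν|} := by
    ext ω
    have : (∑ k, f (ω k)) - m * ∫ x, f x ∂ν = m * ((∑ k, f (ω k)) / m - ∫ x, f x ∂ν) := by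
      field_simp
    simp only [Set.mem_ofPred_eq]
    rw [this, abs_mul, abs_of_pos hm0, mul_le_mul_iff_right₀ hm0]
  have hv := variance_nonneg f ν
  rw [hset, measureReal_def]
  refine (ENNReal.toReal_mono ENNReal.ofReal_ne_top hc).trans ?_
  rw [ENNReal.toReal_ofReal (by positivity)]
  apply le_of_eq
  field_simp

/-! ### Deterministic facts on cosine similarity -/

lemma dotp_self_pos {n : ℕ} {x : Fin n → ℝ} (hx : x ≠ 0) : 0 < dotp x x := by
  obtain ⟨i, hi⟩ := Function.ne_iff.mp hx
  exact Finset.sum_pos' (fun j _ => mul_self_nonneg _)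
    ⟨i, Finset.mem_univ _, mul_self_pos.mpr hi⟩

lemma lt_cosSim {n : ℕ} {x y : Fin n → ℝ} {c : ℝ} (hx : 0 < dotp x x) (hy : 0 < dotp y y)
    (h : c * Real.sqrt (dotp x x * dotp y y) < dotp x y) : c < cosSim x y := by
  have hx0 : x ≠ 0 := by rintro rfl; simp [dotp] at hx
  have hy0 : y ≠ 0 := by rintro rfl; simp [dotp] at hy
  rw [cosSim, if_pos ⟨hx0, hy0⟩, enorm', enorm', ← Real.sqrt_mul hx.le,
    lt_div_iff₀ (Real.sqrt_pos.mpr (mul_pos hx hy))]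
  exact h

/-- With `c = cosSim u v`, `a = ‖u‖²`, `b = ‖v‖²`: the correlation of the two pre-activations
strictly exceeds `c`. For `c ≤ 0` this is
`√((a+1)(b+1)) ≥ √(ab) + 1`; for `c > 0`, squaring reduces it to the hypothesis on `c`
(which also forces `c < 1`). -/
lemma cos_lt_limit {d : ℕ} {u v : Fin d → ℝ} (hu : u ≠ 0) (hv : v ≠ 0)
    {r : ℝ} (hr : 0 < r) (hnorm : enorm' u = r * enorm' v)
    (hcos : cosSim u v < ((1 / 2) * (r + 1 / r))⁻¹) :
    cosSim u v * Real.sqrt ((dotp u u + 1) / 2 * ((dotp v v + 1) / 2)) < (dotp u v + 1) / 2 := by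
  have hs : 0 < enorm' v := Real.sqrt_pos.mpr (dotp_self_pos hv)
  have hvv : dotp v v = enorm' v ^ 2 := (Real.sq_sqrt (dotp_self_pos hv).le).symm
  have huu : dotp u u = (r * enorm' v) ^ 2 := by
    rw [← hnorm]; exact (Real.sq_sqrt (dotp_self_pos hu).le).symm
  have huv : dotp u v = cosSim u v * (r * enorm' v * enorm' v) := by
    rw [cosSim, if_pos ⟨hu, hv⟩, hnorm]; field_simp
  rw [huu, hvv, huv]
  generalize cosSim u v = c at *
  generalize enorm' v = s at *
  have hc : c * (r ^ 2 + 1) < 2 * r := by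
    have h : ((1 / 2) * (r + 1 / r))⁻¹ = 2 * r / (r ^ 2 + 1) := by field_simp
    rwa [h, lt_div_iff₀ (by positivity)] at hcos
  have hq : ((r * s) ^ 2 + 1) / 2 * ((s ^ 2 + 1) / 2) =
      (((r * s) ^ 2 + 1) * (s ^ 2 + 1)) / 2 ^ 2 := by ring
  rw [hq, Real.sqrt_div (by positivity), Real.sqrt_sq (by norm_num), ← mul_div_assoc]
  apply div_lt_div_of_pos_right _ (by norm_num : (0 : ℝ) < 2)
  rcases le_or_gt c 0 with h0 | h0
  · have hle : r * s * s + 1 ≤ Real.sqrt (((r * s) ^ 2 + 1) * (s ^ 2 + 1)) := by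
      apply Real.le_sqrt_of_sq_le
      nlinarith [sq_nonneg (r * s - s)]
    nlinarith
  · have hc1 : c < 1 := by nlinarith [sq_nonneg (r - 1)]
    have hrs : 0 < r * s * s := by positivity
    have hpos : 0 < c * (r * s * s) := by positivity
    apply lt_of_pow_lt_pow_left₀ 2 (by positivity)
    rw [mul_pow, Real.sq_sqrt (by positivity)]
    have h1 : c * (c * (r ^ 2 + 1)) * s ^ 2 < c * (2 * r) * s ^ 2 := by gcongr
    nlinarith

/-! ### Reduction to independent standard neurons -/

/-- Repacking `m` independent standard neurons, scaled by `1/√m`, into a weight matrix and a bias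
vector gives the law of the layer. -/
lemma measurePreserving_layer (d m : ℕ) :
    MeasurePreserving
      (fun ω : Fin m → (Fin d → ℝ) × ℝ =>
        ((fun k l => (Real.sqrt m)⁻¹ * (ω k).1 l, fun k => (Real.sqrt m)⁻¹ * (ω k).2) :
          (Fin m → Fin d → ℝ) × (Fin m → ℝ)))
      (Measure.pi fun _ : Fin m => stdRow d)
      ((Measure.pi fun _ : Fin m => Measure.pi fun _ : Fin d => gaussianReal 0 (1 / m)).prod
        (Measure.pi fun _ : Fin m => gaussianReal 0 (1 / m))) := by
  have h1 : MeasurePreserving (fun x : ℝ => (Real.sqrt m)⁻¹ * x)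
      (gaussianReal 0 1) (gaussianReal 0 (1 / m)) := by
    refine ⟨by fun_prop, ?_⟩
    rw [gaussianReal_map_const_mul, mul_zero, mul_one]
    congr 1
    ext
    simp [inv_pow]
  have h2 := measurePreserving_pi (fun _ : Fin d => gaussianReal 0 1) _ (fun _ => h1)
  have h3 := measurePreserving_pi (fun _ : Fin m => stdRow d) _ (fun _ => h2.prod h1)
  exact (measurePreserving_arrowProdEquivProdArrow _ _ (Fin m) _ _).comp h3

/-- The inner products of the activation vectors are exactly sample means. -/
lemma dotp_relu_layer {d m : ℕ} (a b : Fin d → ℝ) (ω : Fin m → (Fin d → ℝ) × ℝ) :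
    dotp (relu fun k => (∑ l, (Real.sqrt m)⁻¹ * (ω k).1 l * a l) + (Real.sqrt m)⁻¹ * (ω k).2)
      (relu fun k => (∑ l, (Real.sqrt m)⁻¹ * (ω k).1 l * b l) + (Real.sqrt m)⁻¹ * (ω k).2) =
    (∑ k, act a b (ω k)) / m := by
  have hs : (0 : ℝ) ≤ (Real.sqrt m)⁻¹ := by positivity
  have h : ∀ (c : Fin d → ℝ) k,
      max ((∑ l, (Real.sqrt m)⁻¹ * (ω k).1 l * c l) + (Real.sqrt m)⁻¹ * (ω k).2) 0 =
        (Real.sqrt m)⁻¹ * max (lin c 1 (ω k)) 0 := fun c k => by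
    rw [mul_max_of_nonneg _ _ hs, mul_zero, lin, mul_add, Finset.mul_sum, one_mul]
    simp only [mul_assoc]
  simp only [dotp, relu, h, act]
  rw [Finset.sum_div]
  refine Finset.sum_congr rfl fun k _ => ?_
  have h2 : (Real.sqrt m)⁻¹ * (Real.sqrt m)⁻¹ = (m : ℝ)⁻¹ := by
    rw [← mul_inv, Real.mul_self_sqrt (Nat.cast_nonneg m)]
  rw [div_eq_mul_inv, ← h2]; ring

/-- Continuity: near the limiting values the strict inequality persists. -/
lemma exists_eps {c p a b : ℝ} (ha : 0 < a) (hb : 0 < b) (h : c * Real.sqrt (a * b) < p) :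
    ∃ ε > 0, ∀ p' a' b' : ℝ, |p' - p| < ε → |a' - a| < ε → |b' - b| < ε →
      0 < a' ∧ 0 < b' ∧ c * Real.sqrt (a' * b') < p' := by
  have ho : IsOpen {q : ℝ × ℝ × ℝ | 0 < q.2.1 ∧ 0 < q.2.2 ∧
      c * Real.sqrt (q.2.1 * q.2.2) < q.1} := by
    refine IsOpen.and ?_ (IsOpen.and ?_ ?_) <;> exact isOpen_lt (by fun_prop) (by fun_prop)
  obtain ⟨ε, hε, hball⟩ := Metric.isOpen_iff.mp ho (p, a, b) ⟨ha, hb, h⟩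
  refine ⟨ε, hε, fun p' a' b' h1 h2 h3 => ?_⟩
  have : (p', a', b') ∈ Metric.ball (p, a, b) ε := by
    simp only [Metric.mem_ball, Prod.dist_eq, Real.dist_eq, max_lt_iff]
    exact ⟨h1, h2, h3⟩
  exact hball this

theorem relu_layer_increases_cosSim_whp
    (d : ℕ) (hd : 0 < d) (u v : Fin d → ℝ) (hu : u ≠ 0) (hv : v ≠ 0)
    (r : ℝ) (hr : 0 < r) (hnorm : enorm' u = r * enorm' v)
    (hcos : cosSim u v < ((1 / 2) * (r + 1 / r))⁻¹) :
    ∃ C > (0 : ℝ), ∀ m : ℕ, 1 ≤ m →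
      (1 - C / m : ℝ) ≤
        (((Measure.pi fun _ : Fin m => Measure.pi fun _ : Fin d =>
              gaussianReal 0 (1 / m)).prod
            (Measure.pi fun _ : Fin m => gaussianReal 0 (1 / m)))
          {ω : (Fin m → Fin d → ℝ) × (Fin m → ℝ) |
            cosSim u v <
              cosSim (relu fun k => (∑ l, ω.1 k l * u l) + ω.2 k)
                     (relu fun k => (∑ l, ω.1 k l * v l) + ω.2 k)}).toReal := by
  have hlim : cosSim u v * Real.sqrt ((∫ z, act u u z ∂(stdRow d)) * ∫ z, act v v z ∂(stdRow d)) <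
      ∫ z, act u v z ∂(stdRow d) := by
    rw [integral_act_self, integral_act_self]
    exact (cos_lt_limit hu hv hr hnorm hcos).trans_le (le_integral_act u v)
  have hpos : ∀ {w : Fin d → ℝ}, w ≠ 0 → 0 < ∫ z, act w w z ∂(stdRow d) := fun {w} hw => by
    rw [integral_act_self]; linarith [dotp_self_pos hw]
  obtain ⟨ε, hε, hgood⟩ := exists_eps (hpos hu) (hpos hv) hlim
  -- Sum of the three Chebyshev constants; the extra `1` only makes `C` positive.
  refine ⟨Var[act u v; stdRow d] / ε ^ 2 + Var[act u u; stdRow d] / ε ^ 2 +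
    Var[act v v; stdRow d] / ε ^ 2 + 1, ?_, fun m hm => ?_⟩
  · have h1 := variance_nonneg (act u v) (stdRow d)
    have h2 := variance_nonneg (act u u) (stdRow d)
    have h3 := variance_nonneg (act v v) (stdRow d)
    positivity
  have hm0 : (0 : ℝ) < m := by exact_mod_cast hm
  have hT := measurePreserving_layer d m
  rw [← hT.map_eq]
  -- The pushforward bounds the preimage from above for every set, so no measurability of the
  -- event is needed.
  refine le_trans ?_ (ENNReal.toReal_mono (by
    rw [hT.map_eq]; exact measure_ne_top _ _) (Measure.le_map_apply hT.aemeasurable _))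
  set P := Measure.pi fun _ : Fin m => stdRow d with hP
  let bad (f : (Fin d → ℝ) × ℝ → ℝ) : Set (Fin m → (Fin d → ℝ) × ℝ) :=
    {ω | ε ≤ |(∑ k, f (ω k)) / m - ∫ x, f x ∂(stdRow d)|}
  have hb : ∀ a b : Fin d → ℝ, P.real (bad (act a b)) ≤ Var[act a b; stdRow d] / ε ^ 2 / m :=
    fun a b => chebyshev_pi (stdRow d) (memLp_act a b) hε m hm
  rw [Set.preimage_ofPred_eq, ← measureReal_def]
  set G : Set (Fin m → (Fin d → ℝ) × ℝ) := {ω | _} with hG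
  have hcover : Set.univ ⊆ G ∪ (bad (act u v) ∪ bad (act u u) ∪ bad (act v v)) := by
    intro ω _
    by_contra hω
    simp only [Set.mem_union, not_or, bad, Set.mem_ofPred_eq, not_le] at hω
    obtain ⟨hnot, ⟨h1, h2⟩, h3⟩ := hω
    obtain ⟨g1, g2, g3⟩ := hgood _ _ _ h1 h2 h3
    apply hnot
    simp only [hG, Set.mem_ofPred_eq]
    apply lt_cosSim <;> simp only [dotp_relu_layer] <;> assumption
  have hle : P.real Set.univ ≤
      P.real G + (P.real (bad (act u v)) + P.real (bad (act u u)) + P.real (bad (act v v))) :=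
    (measureReal_mono hcover).trans <| (measureReal_union_le _ _).trans <| by
      gcongr
      exact (measureReal_union_le _ _).trans (by gcongr; exact measureReal_union_le _ _)
  rw [probReal_univ] at hle
  have h1 := hb u v
  have h2 := hb u u
  have h3 := hb v v
  have h4 : 0 < 1 / (m : ℝ) := by positivity
  rw [add_div, add_div, add_div]
  linarith
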